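/- Let d ≥ 1, D ≥ 3 and e be integers with 1 ≤ e ≤ D and e ∣ D, assume (D−2)(d−1) + D/e ≥ 2, and let A ⊆ ℕ^d be of one-singular-point type for D and e. Set t₀ := (D−2)(d−1) + D/e − 2 and s₀ := (D/e)·t₀. If y belongs to the additive submonoid ⟨A⟩ of ℕ^d generated by A and |y| ≤ t₀·D, then y ∈ s₀·A. -/

import Mathlib

open Pointwise

/-- The `s`-fold sumset of `A`: `0A = {0}` and `(s+1)A = A + sA`. -/
def sumset {M : Type*} [AddMonoid M] (A : Set M) : ℕ → Set M
  | 0 => {0}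
  | s + 1 => A + sumset A s

/-- `ℕ_e^d = {y ∈ ℕ^d : e ∣ |y|}`. -/
def NatE (d e : ℕ) : Set (Fin d → ℕ) := {y | e ∣ ∑ j, y j}

/-- `Δ_{s,e} = {y ∈ ℕ_e^d : |y| ≤ sD}`. -/
def DeltaE (d D e s : ℕ) : Set (Fin d → ℕ) := {y | e ∣ ∑ j, y j ∧ ∑ j, y j ≤ s * D}

/-- The hole set `H = ℕ_e^d \ ⟨A⟩`, where `⟨A⟩` is the additive submonoid generated by `A`. -/
def Holes (d e : ℕ) (A : Set (Fin d → ℕ)) : Set (Fin d → ℕ) :=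
  NatE d e \ (AddSubmonoid.closure A : Set (Fin d → ℕ))

/-- The set `{0, Dε₁, …, Dε_d}`. -/
def Erays (d D : ℕ) : Set (Fin d → ℕ) :=
  insert 0 (Set.range fun i : Fin d => Pi.single i D)

/-- `A ⊆ ℕ^d` is of one-singular-point type for `D` and `e`: every `a ∈ A` satisfies
`|a| ≤ D` and `e ∣ |a|`, and `A` contains `0`, the vectors `(D-1)εᵢ + εⱼ` for all `i, j`,
and the vectors `(D-e)εᵢ` for all `i`. -/
def OneSingType (d D e : ℕ) (A : Set (Fin d → ℕ)) : Prop :=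
  (∀ a ∈ A, ∑ j, a j ≤ D ∧ e ∣ ∑ j, a j) ∧
  (0 : Fin d → ℕ) ∈ A ∧
  (∀ i j : Fin d, Pi.single i (D - 1) + Pi.single j 1 ∈ A) ∧
  (∀ i : Fin d, Pi.single i (D - e) ∈ A)

/-! Discard `0` from `A`. Every remaining generator has weight `|a| ≥ e`, so an expression of
`y ∈ ⟨A⟩` as a sum of `n` nonzero generators has `n * e ≤ |y|`; if `|y| ≤ s * e` then `n ≤ s`, and
padding with `s - n` copies of `0 ∈ A` puts `y` in `sA`. For `s = (D / e) * t` the bound `s * e`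
is `t * D`. -/

section AddMonoid

variable {M N : Type*} [AddMonoid M] {A : Set M} {y : M}

theorem sumset_eq_nsmul (A : Set M) (s : ℕ) : sumset A s = s • A := by
  induction s with
  | zero => rw [zero_nsmul]; rfl
  | succ s ih => rw [succ_nsmul', ← ih]; rfl

theorem exists_mem_nsmul_of_mem_closure (hy : y ∈ AddSubmonoid.closure A) :
    ∃ n : ℕ, y ∈ n • A := by
  induction hy using AddSubmonoid.closure_induction with
  | mem a ha => exact ⟨1, by rwa [one_nsmul]⟩
  | zero => exact ⟨0, by rw [zero_nsmul]; exact Set.zero_mem_zero⟩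
  | add x z _ _ hx hz =>
    obtain ⟨m, hm⟩ := hx
    obtain ⟨n, hn⟩ := hz
    exact ⟨m + n, by rw [add_nsmul]; exact Set.add_mem_add hm hn⟩

theorem nsmul_le_map_of_mem_nsmul [AddMonoid N] [Preorder N] [AddLeftMono N] [AddRightMono N]
    (w : M →+ N) {e : N} (hA : ∀ a ∈ A, e ≤ w a) {n : ℕ} (hy : y ∈ n • A) : n • e ≤ w y := by
  induction n generalizing y with
  | zero =>
    rw [zero_nsmul, Set.mem_zero] at hy
    rw [hy, zero_nsmul, map_zero]
  | succ n ih =>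
    rw [succ_nsmul] at hy
    obtain ⟨x, hx, a, ha, rfl⟩ := Set.mem_add.mp hy
    rw [succ_nsmul, map_add]
    exact add_le_add (ih hx) (hA a ha)

theorem mem_nsmul_of_mem_closure_of_map_le [AddCommMonoid N] [LinearOrder N]
    [IsOrderedCancelAddMonoid N] (w : M →+ N) {e : N} (he : 0 < e) (h_zero : 0 ∈ A)
    (hA : ∀ a ∈ A, a ≠ 0 → e ≤ w a) (hy : y ∈ AddSubmonoid.closure A)
    {s : ℕ} (hle : w y ≤ s • e) : y ∈ s • A := by
  rw [← AddSubmonoid.closure_sdiff_singleton_zero] at hy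
  obtain ⟨n, hn⟩ := exists_mem_nsmul_of_mem_closure hy
  have h_weight : n • e ≤ w y := nsmul_le_map_of_mem_nsmul w (fun a ha => hA a ha.1 ha.2) hn
  have h_count : n ≤ s := (nsmul_le_nsmul_iff_left he).mp (h_weight.trans hle)
  exact Set.nsmul_subset_nsmul Set.sdiff_subset h_zero h_count hn

end AddMonoid

theorem stmt_11_general {ι : Type*} [Fintype ι] {e s : ℕ} (he : 0 < e) {A : Set (ι → ℕ)}
    (h_zero : 0 ∈ A) (hA : ∀ a ∈ A, e ∣ ∑ j, a j) {y : ι → ℕ}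
    (hy : y ∈ AddSubmonoid.closure A) (hle : ∑ j, y j ≤ s * e) : y ∈ sumset A s := by
  let weight : (ι → ℕ) →+ ℕ := ∑ j, Pi.evalAddMonoidHom (fun _ => ℕ) j
  have weight_apply (z : ι → ℕ) : weight z = ∑ j, z j := by
    simp only [weight, AddMonoidHom.finsetSum_apply, Pi.evalAddMonoidHom_apply]
  have le_weight (a) (ha : a ∈ A) (ha_ne : a ≠ 0) : e ≤ weight a := by
    refine Nat.le_of_dvd (Nat.pos_of_ne_zero fun h => ha_ne ?_) (weight_apply a ▸ hA a ha)
    simpa [weight_apply, funext_iff] using h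
  rw [sumset_eq_nsmul]
  exact mem_nsmul_of_mem_closure_of_map_le weight he h_zero le_weight hy
    (by rwa [weight_apply, smul_eq_mul])

theorem stmt_11 (d D e : ℕ) (hd : 1 ≤ d) (hD : 3 ≤ D) (he : 1 ≤ e) (heD : e ≤ D)
    (hdvd : e ∣ D) (ht : 2 ≤ (D - 2) * (d - 1) + D / e)
    (A : Set (Fin d → ℕ)) (hA : OneSingType d D e A)
    (y : Fin d → ℕ) (hy : y ∈ AddSubmonoid.closure A)
    (hle : ∑ j, y j ≤ ((D - 2) * (d - 1) + D / e - 2) * D) :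
    y ∈ sumset A ((D / e) * ((D - 2) * (d - 1) + D / e - 2)) := by
  obtain ⟨h_bound, h_zero, -, -⟩ := hA
  exact stmt_11_general he h_zero (fun a ha => (h_bound a ha).2) hy
    (by rwa [mul_right_comm, Nat.div_mul_cancel hdvd, mul_comm])
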